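/- arXiv:2605.16016 — 2 statements merged into one kernel-verified Lean document; each statement's English description precedes it below -/
import Mathlib

section
/- Every traceless Hermitian 8×8 complex matrix M can be written as M = H₁ + H₂ + H₃ + H₄, where for each l ∈ {1,2,3,4} one has H_l = A_l + B_l with A_l in the real span of the three generators of the class G_l and B_l a traceless Hermitian 8×8 matrix commuting with all three generators of G_l. (Four-class decomposition of the three-qubit generator space by local SU(2) symmetry.) -/
/-!
The 64 Pauli strings `P_a ⊗ P_b ⊗ P_c` form a real basis of the Hermitian 8×8 matrices
(`eight_smul_eq_sum`, a consequence of the completeness relation `pauli_completeness`), and the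
coefficient of the identity string is proportional to the trace. So it suffices to place each
non-identity string in the sum of the four spaces `span ℝ G_l + C_l`, where `C_l` is the space of
traceless Hermitian matrices commuting with `G_l`.

Two Pauli strings commute up to a sign, the product of the three one-qubit signs. Label the
one-qubit Paulis by the elements of the field `𝔽₄`. The string `(a, b, c)` commutes with the four
classes exactly when, respectively, `a = 0`, `b + c = a`, `b + c = ω a`, `b + c = ω² a`. If
`a ≠ 0`, the only value of `b + c` not covered is `0`, and the twelve strings `(a, b, b)` with
`a ≠ 0` are exactly the twelve generators. This finite check is `string_classification`.
-/

open Matrix Kronecker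

noncomputable section

abbrev M2 : Type := Matrix (Fin 2) (Fin 2) ℂ
abbrev M4 : Type := Matrix (Fin 2 × Fin 2) (Fin 2 × Fin 2) ℂ
abbrev M8 : Type := Matrix (Fin 2 × Fin 2 × Fin 2) (Fin 2 × Fin 2 × Fin 2) ℂ

/-- Pauli X -/
def σx : M2 := !![0, 1; 1, 0]
/-- Pauli Y -/
def σy : M2 := !![0, -Complex.I; Complex.I, 0]
/-- Pauli Z -/
def σz : M2 := !![1, 0; 0, -1]
/-- 2×2 identity -/
def I₂ : M2 := 1

/-- The generators of the four local SU(2) classes G₁, G₂, G₃, G₄. -/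
def G : Fin 4 → Fin 3 → M8 :=
  ![![σx ⊗ₖ (I₂ ⊗ₖ I₂), σy ⊗ₖ (I₂ ⊗ₖ I₂), σz ⊗ₖ (I₂ ⊗ₖ I₂)],
    ![σx ⊗ₖ (σx ⊗ₖ σx), σy ⊗ₖ (σy ⊗ₖ σy), σz ⊗ₖ (σz ⊗ₖ σz)],
    ![σx ⊗ₖ (σy ⊗ₖ σy), σy ⊗ₖ (σz ⊗ₖ σz), σz ⊗ₖ (σx ⊗ₖ σx)],
    ![σx ⊗ₖ (σz ⊗ₖ σz), σy ⊗ₖ (σx ⊗ₖ σx), σz ⊗ₖ (σy ⊗ₖ σy)]]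

/-- The `l`-th local SU(2) class, as a set of 8×8 matrices. -/
def Gset (l : Fin 4) : Set M8 := Set.range (G l)

/-- The Pauli matrices `I, X, Y, Z`, labelled `0, 1, 2, 3`. -/
def pauli : Fin 4 → M2 := ![I₂, σx, σy, σz]

/-- The three-qubit Pauli string with labels `p.1, p.2.1, p.2.2`. -/
def pauliString (p : Fin 4 × Fin 4 × Fin 4) : M8 :=
  pauli p.1 ⊗ₖ (pauli p.2.1 ⊗ₖ pauli p.2.2)

/-- The sign in `P_a P_b = ± P_b P_a`. -/
def pauliSign (a b : Fin 4) : ℤ := if a = 0 ∨ b = 0 ∨ a = b then 1 else -1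

/-- The labels of the generators, as Pauli strings. -/
def genLabel : Fin 4 → Fin 3 → Fin 4 × Fin 4 × Fin 4 :=
  ![![(1, 0, 0), (2, 0, 0), (3, 0, 0)],
    ![(1, 1, 1), (2, 2, 2), (3, 3, 3)],
    ![(1, 2, 2), (2, 3, 3), (3, 1, 1)],
    ![(1, 3, 3), (2, 1, 1), (3, 2, 2)]]

lemma G_eq_pauliString (l : Fin 4) (k : Fin 3) : G l k = pauliString (genLabel l k) := by
  fin_cases l <;> fin_cases k <;> rfl

lemma pauli_conjTranspose (a : Fin 4) : (pauli a)ᴴ = pauli a := by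
  fin_cases a <;> ext i j <;> fin_cases i <;> fin_cases j <;>
    simp [pauli, I₂, σx, σy, σz]

lemma pauli_trace {a : Fin 4} (ha : a ≠ 0) : (pauli a).trace = 0 := by
  fin_cases a <;> simp_all [pauli, σx, σy, σz, Matrix.trace, Fin.sum_univ_two]

lemma pauli_comm (a b : Fin 4) :
    pauli a * pauli b = (pauliSign a b : ℂ) • (pauli b * pauli a) := by
  fin_cases a <;> fin_cases b <;>
    simp [pauli, I₂, σx, σy, σz, pauliSign]

lemma pauli_completeness (i j k l : Fin 2) :
    ∑ a, pauli a i j * pauli a k l = if i = l ∧ j = k then 2 else 0 := by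
  have h : ∑ a, pauli a i j * pauli a k l =
      I₂ i j * I₂ k l + σx i j * σx k l + σy i j * σy k l + σz i j * σz k l :=
    Fin.sum_univ_four _
  rw [h]
  fin_cases i <;> fin_cases j <;> fin_cases k <;> fin_cases l <;>
    norm_num [I₂, σx, σy, σz]

lemma pauliString_conjTranspose (p : Fin 4 × Fin 4 × Fin 4) :
    (pauliString p)ᴴ = pauliString p := by
  simp [pauliString, Matrix.conjTranspose_kronecker, pauli_conjTranspose]

lemma pauliString_trace {p : Fin 4 × Fin 4 × Fin 4} (hp : p ≠ 0) :
    (pauliString p).trace = 0 := by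
  obtain ⟨a, b, c⟩ := p
  have h : a ≠ 0 ∨ b ≠ 0 ∨ c ≠ 0 := by
    by_contra! h
    exact hp (by simp [h])
  rcases h with h | h | h <;>
    simp [pauliString, Matrix.trace_kronecker, pauli_trace h]

lemma pauliString_comm (p q : Fin 4 × Fin 4 × Fin 4)
    (h : pauliSign p.1 q.1 * (pauliSign p.2.1 q.2.1 * pauliSign p.2.2 q.2.2) = 1) :
    pauliString p * pauliString q = pauliString q * pauliString p := by
  have h' : (pauliSign p.1 q.1 : ℂ) *
      ((pauliSign p.2.1 q.2.1 : ℂ) * (pauliSign p.2.2 q.2.2 : ℂ)) = 1 := by exact_mod_cast h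
  simp only [pauliString, ← Matrix.mul_kronecker_mul]
  rw [pauli_comm p.1, pauli_comm p.2.1, pauli_comm p.2.2]
  simp only [Matrix.smul_kronecker, Matrix.kronecker_smul, smul_smul]
  rw [mul_comm, mul_comm (pauliSign p.2.2 q.2.2 : ℂ), h', one_smul]

/-- Every non-identity label is the label of a generator, or commutes with a whole class. -/
lemma string_classification (p : Fin 4 × Fin 4 × Fin 4) (hp : p ≠ 0) :
    (∃ l k, genLabel l k = p) ∨
    ∃ l, ∀ k, pauliSign p.1 (genLabel l k).1 *
      (pauliSign p.2.1 (genLabel l k).2.1 * pauliSign p.2.2 (genLabel l k).2.2) = 1 := by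
  revert p
  decide

lemma pauliString_completeness (I J K L : Fin 2 × Fin 2 × Fin 2) :
    ∑ p, pauliString p I J * pauliString p K L = if I = L ∧ J = K then 8 else 0 := by
  have h : ∑ p, pauliString p I J * pauliString p K L =
      (∑ a, pauli a I.1 J.1 * pauli a K.1 L.1) *
      ((∑ b, pauli b I.2.1 J.2.1 * pauli b K.2.1 L.2.1) *
        ∑ c, pauli c I.2.2 J.2.2 * pauli c K.2.2 L.2.2) := by
    rw [Finset.sum_mul_sum, Finset.sum_mul]
    simp only [Finset.mul_sum, Fintype.sum_prod_type, pauliString, Matrix.kroneckerMap_apply]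
    refine Finset.sum_congr rfl fun a _ => Finset.sum_congr rfl fun b _ =>
      Finset.sum_congr rfl fun c _ => by ring
  rw [h]
  simp only [pauli_completeness, Prod.ext_iff]
  split_ifs <;> first | (exfalso; tauto) | norm_num

/-- The Pauli expansion of an arbitrary matrix. -/
lemma eight_smul_eq_sum (M : M8) :
    (8 : ℂ) • M = ∑ p, (pauliString p * M).trace • pauliString p := by
  ext I J
  have h : ∀ p, (pauliString p * M).trace * pauliString p I J =
      ∑ K, ∑ L, M L K * (pauliString p I J * pauliString p K L) := by
    intro p
    simp only [Matrix.trace, Matrix.diag_apply, Matrix.mul_apply, Finset.sum_mul]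
    refine Finset.sum_congr rfl fun K _ => Finset.sum_congr rfl fun L _ => by ring
  simp only [Matrix.sum_apply, Matrix.smul_apply, smul_eq_mul, h]
  rw [Finset.sum_comm]
  simp_rw [Finset.sum_comm (s := (Finset.univ : Finset (Fin 4 × Fin 4 × Fin 4))),
    ← Finset.mul_sum, pauliString_completeness]
  simp [ite_and, mul_comm]

/-- The coefficients of a Hermitian matrix in the Pauli basis are real. -/
lemma trace_pauliString_mul_real {M : M8} (hM : Mᴴ = M) (p : Fin 4 × Fin 4 × Fin 4) :
    (((pauliString p * M).trace.re : ℝ) : ℂ) = (pauliString p * M).trace := by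
  rw [← Complex.conj_eq_iff_re]
  change star _ = _
  rw [← Matrix.trace_conjTranspose, Matrix.conjTranspose_mul, hM, pauliString_conjTranspose,
    Matrix.trace_mul_comm]

/-- The real space of traceless Hermitian matrices commuting with the class `G_l`. -/
def commutantSpace (l : Fin 4) : Submodule ℝ M8 where
  carrier := {B | Bᴴ = B ∧ B.trace = 0 ∧ ∀ P ∈ Gset l, B * P = P * B}
  zero_mem' := by simp
  add_mem' := by
    rintro B C ⟨h1, h2, h3⟩ ⟨k1, k2, k3⟩
    refine ⟨by simp [h1, k1], by simp [h2, k2], fun P hP => ?_⟩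
    rw [add_mul, mul_add, h3 P hP, k3 P hP]
  smul_mem' := by
    rintro r B ⟨h1, h2, h3⟩
    refine ⟨by simp [Matrix.conjTranspose_smul, h1], by simp [Matrix.trace_smul, h2],
      fun P hP => ?_⟩
    rw [smul_mul_assoc, mul_smul_comm, h3 P hP]

/-- The space of admissible summands `H_l`. -/
def classSpace (l : Fin 4) : Submodule ℝ M8 :=
  Submodule.span ℝ (Gset l) ⊔ commutantSpace l

lemma pauliString_mem {p : Fin 4 × Fin 4 × Fin 4} (hp : p ≠ 0) :
    pauliString p ∈ ⨆ l, classSpace l := by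
  rcases string_classification p hp with ⟨l, k, rfl⟩ | ⟨l, h⟩
  · refine Submodule.mem_iSup_of_mem l (Submodule.mem_sup_left (Submodule.subset_span ?_))
    exact ⟨k, G_eq_pauliString l k⟩
  · refine Submodule.mem_iSup_of_mem l (Submodule.mem_sup_right
      ⟨pauliString_conjTranspose p, pauliString_trace hp, ?_⟩)
    rintro _ ⟨k, rfl⟩
    rw [G_eq_pauliString]
    exact pauliString_comm _ _ (h k)

lemma mem_iSup_classSpace {M : M8} (hM : Mᴴ = M) (htr : M.trace = 0) :
    M ∈ ⨆ l, classSpace l := by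
  have h8 : (8 : ℝ) • M = ∑ p, (pauliString p * M).trace.re • pauliString p := by
    have h : ∀ p, (pauliString p * M).trace.re • pauliString p =
        (pauliString p * M).trace • pauliString p := fun p => by
      conv_rhs => rw [← trace_pauliString_mul_real hM p]
      rw [Complex.coe_smul]
    rw [Finset.sum_congr rfl fun p _ => h p, ← eight_smul_eq_sum, ← Complex.coe_smul]
    norm_num
  have hmem : (8 : ℝ) • M ∈ ⨆ l, classSpace l := by
    rw [h8]
    refine Submodule.sum_mem _ fun p _ => ?_
    by_cases hp : p = 0
    · have h1 : pauliString 0 = 1 := by simp [pauliString, pauli, I₂]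
      rw [hp, h1, one_mul, htr, Complex.zero_re, zero_smul]
      exact Submodule.zero_mem _
    · exact Submodule.smul_mem _ _ (pauliString_mem hp)
  simpa using (Submodule.smul_mem_iff _ (by norm_num : (8 : ℝ) ≠ 0)).mp hmem

/-- Four-class decomposition of the traceless Hermitian 8×8 matrices by local SU(2) symmetry:
M = H₁ + H₂ + H₃ + H₄ where each H_l = A_l + B_l with A_l in the real span of the generators of
class G_l and B_l traceless Hermitian commuting with all generators of G_l. -/
theorem stmt_7 (M : M8) (hM : Mᴴ = M) (htr : M.trace = 0) :
    ∃ H : Fin 4 → M8, M = H 0 + H 1 + H 2 + H 3 ∧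
      ∀ l : Fin 4, ∃ A B : M8, H l = A + B ∧
        A ∈ Submodule.span ℝ (Gset l) ∧
        Bᴴ = B ∧ B.trace = 0 ∧
        ∀ P ∈ Gset l, B * P = P * B := by
  obtain ⟨H, hH⟩ := (Submodule.mem_iSup_iff_exists_finsupp _ _).mp (mem_iSup_classSpace hM htr)
  refine ⟨H, ?_, fun l => ?_⟩
  · rw [← hH.2, Finsupp.sum_fintype _ _ (fun _ => rfl), Fin.sum_univ_four]
  · obtain ⟨A, hA, B, hB, hAB⟩ := Submodule.mem_sup.mp (hH.1 l)
    exact ⟨A, B, hAB.symm, hA, hB⟩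
end
end

section
/- There exists a unitary 8×8 complex matrix U, independent of H, with the following property: for every 8×8 complex matrix H that commutes with each of X⊗X⊗X, Y⊗Y⊗Y, and Z⊗Z⊗Z, there exists a 4×4 complex matrix H' such that U·H·U⁻¹ = I₂⊗H'; moreover, if H is Hermitian then H' can be chosen Hermitian. In other words, any three-qubit Hamiltonian with the local SU(2) symmetry of class G₂ is unitarily compressed to an operator acting non-trivially only on an effective two-qubit subsystem. -/
/-!
The operators `X⊗X⊗X` and `Z⊗Z⊗Z` flip all three bits of a computational basis state and read off
its parity. The linear change of bits `(a, b, c) ↦ (a+b+c, a+b, b+c)` over `𝔽₂` turns the parity into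
the first bit and leaves the other two new bits invariant under the simultaneous flip, so the
corresponding permutation matrix `U` conjugates `Z⊗Z⊗Z` to `Z⊗1⊗1` and `X⊗X⊗X` to `X⊗1⊗1`. A matrix
commuting with `Z⊗1⊗1` is block diagonal, and commuting with `X⊗1⊗1` makes the two blocks equal; the
common block is `H'`. It is a principal submatrix of `H`, hence Hermitian when `H` is.
-/

open Matrix Kronecker

noncomputable section

/-- The inverse `(p, q, r) ↦ (p+r, p+q+r, p+q)` of `(a, b, c) ↦ (a+b+c, a+b, b+c)` on bit strings,
with addition in `Fin 2` being addition modulo 2. -/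
def decodeBits (i : Fin 2 × Fin 2 × Fin 2) : Fin 2 × Fin 2 × Fin 2 :=
  (i.1 + i.2.2, i.1 + i.2.1 + i.2.2, i.1 + i.2.1)

lemma decodeBits_injective : Function.Injective decodeBits := by
  unfold Function.Injective decodeBits
  decide

/-- The permutation matrix sending the basis vector at `decodeBits i` to the one at `i`. -/
def compressU : M8 := (1 : M8).submatrix decodeBits id

lemma compressU_mul_conjTranspose : compressU * compressUᴴ = 1 := by
  rw [compressU, conjTranspose_submatrix, conjTranspose_one,
    ← submatrix_mul (1 : M8) 1 decodeBits id decodeBits Function.bijective_id, mul_one]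
  exact submatrix_one _ decodeBits_injective

lemma compressU_conj (H : M8) :
    compressU * H * compressU⁻¹ = H.submatrix decodeBits decodeBits := by
  rw [inv_eq_right_inv compressU_mul_conjTranspose, compressU, conjTranspose_submatrix,
    conjTranspose_one]
  have h1 : (1 : M8).submatrix decodeBits id * H = H.submatrix decodeBits id := by
    ext i j
    simp [mul_apply, one_apply]
  rw [h1]
  ext i j
  simp [mul_apply, one_apply]

/-- Commuting with `X⊗X⊗X` is invariance of the entries under flipping all bits of both indices. -/
lemma apply_flip_of_commute_xxx {H : M8}
    (h : H * (σx ⊗ₖ (σx ⊗ₖ σx)) = (σx ⊗ₖ (σx ⊗ₖ σx)) * H) (i j : Fin 2 × Fin 2 × Fin 2) :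
    H (i + 1) (j + 1) = H i j := by
  have hX : σx ⊗ₖ (σx ⊗ₖ σx) = (1 : M8).submatrix (· + 1) id := by
    ext ⟨a, b, c⟩ ⟨a', b', c'⟩
    fin_cases a <;> fin_cases b <;> fin_cases c <;> fin_cases a' <;> fin_cases b' <;>
      fin_cases c' <;> simp [σx, one_apply] <;> decide
  have := congrFun (congrFun h i) (j + 1)
  rw [hX] at this
  simpa [mul_apply, one_apply] using this.symm

/-- Commuting with `Z⊗Z⊗Z` forces the entries between indices of different parity to vanish. -/
lemma apply_eq_zero_of_commute_zzz {H : M8}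
    (h : H * (σz ⊗ₖ (σz ⊗ₖ σz)) = (σz ⊗ₖ (σz ⊗ₖ σz)) * H) {i j : Fin 2 × Fin 2 × Fin 2}
    (hij : i.1 + i.2.1 + i.2.2 ≠ j.1 + j.2.1 + j.2.2) : H i j = 0 := by
  have hZ : σz ⊗ₖ (σz ⊗ₖ σz) =
      (diagonal fun k => if k.1 + k.2.1 + k.2.2 = 0 then 1 else -1 : M8) := by
    ext ⟨a, b, c⟩ ⟨a', b', c'⟩
    fin_cases a <;> fin_cases b <;> fin_cases c <;> fin_cases a' <;> fin_cases b' <;>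
      fin_cases c' <;> simp [σz]
  have := congrFun (congrFun h i) j
  rw [hZ, mul_diagonal, diagonal_mul] at this
  generalize i.1 + i.2.1 + i.2.2 = s at *
  generalize j.1 + j.2.1 + j.2.2 = t at *
  fin_cases s <;> fin_cases t <;> simp at hij this <;>
    first | linear_combination this / 2 | linear_combination -this / 2

/-- There is a fixed unitary U such that any 8×8 matrix H commuting with X⊗X⊗X, Y⊗Y⊗Y and
Z⊗Z⊗Z is compressed by conjugation to I₂⊗H' for some 4×4 matrix H', Hermitian whenever H is. -/
theorem stmt_14 :
    ∃ U : M8, U * Uᴴ = 1 ∧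
      ∀ H : M8,
        H * (σx ⊗ₖ (σx ⊗ₖ σx)) = (σx ⊗ₖ (σx ⊗ₖ σx)) * H →
        H * (σy ⊗ₖ (σy ⊗ₖ σy)) = (σy ⊗ₖ (σy ⊗ₖ σy)) * H →
        H * (σz ⊗ₖ (σz ⊗ₖ σz)) = (σz ⊗ₖ (σz ⊗ₖ σz)) * H →
        ∃ H' : M4, U * H * U⁻¹ = I₂ ⊗ₖ H' ∧ (Hᴴ = H → H'ᴴ = H') := by
  refine ⟨compressU, compressU_mul_conjTranspose, fun H hx _ hz => ?_⟩
  refine ⟨H.submatrix (fun q => decodeBits (0, q)) (fun q => decodeBits (0, q)), ?_, ?_⟩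
  · rw [compressU_conj]
    have hparity : ∀ i, (decodeBits i).1 + (decodeBits i).2.1 + (decodeBits i).2.2 = i.1 := by
      unfold decodeBits
      decide
    have hflip : ∀ q, decodeBits (1, q) = decodeBits (0, q) + 1 := by
      unfold decodeBits
      decide
    ext ⟨p, q⟩ ⟨p', q'⟩
    by_cases hp : p = p'
    · subst hp
      fin_cases p
      · simp [I₂]
      · simp [I₂, hflip, apply_flip_of_commute_xxx hx]
    · rw [submatrix_apply, apply_eq_zero_of_commute_zzz hz (by simpa [hparity] using hp)]
      simp [I₂, hp]
  · intro hH
    rw [conjTranspose_submatrix, hH]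
end
end
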